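/- Let h ∈ L¹_loc((0,∞)) be real-valued and suppose there exists κ ∈ ℝ with ∫₀^∞ |h(t)| (1+|ln t|)^{-κ} dt < ∞. If Q_h[f] ≥ 0 for all f ∈ C_c^∞((0,∞)), then h agrees almost everywhere on (0,∞) with a C^∞ function h̃ that is completely monotonic, i.e. (-1)^n h̃^{(n)}(t) ≥ 0 for all t > 0 and all n = 0, 1, 2, …; moreover there exist constants C > 0 and ϰ ∈ ℝ such that h̃(t) ≤ C t^{-1} (1+|ln t|)^ϰ for all t > 0. -/

import Mathlib

open MeasureTheory
open scoped ComplexOrder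

noncomputable section

/-- Complex-valued test functions: smooth, compactly supported, support inside `(0,∞)`. -/
def IsTestFun (f : ℝ → ℂ) : Prop :=
  ContDiff ℝ (⊤ : ℕ∞) f ∧ HasCompactSupport f ∧ tsupport f ⊆ Set.Ioi 0

/-- The Hankel quadratic form `Q_h[f] = ∫₀^∞∫₀^∞ h(t+s) f(s) conj(f(t)) ds dt`. -/
def hankelQF (h : ℝ → ℂ) (f : ℝ → ℂ) : ℂ :=
  ∫ t in Set.Ioi (0:ℝ), ∫ s in Set.Ioi (0:ℝ), h (t + s) * f s * (starRingEnd ℂ) (f t)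

open Asymptotics Filter Function Set
open scoped ContDiff Topology

/-!
Mollify `h` in both variables of the kernel `(s, t) ↦ h (s + t)`. The result `u` is smooth, and
positivity of the Hankel form makes the matrices `(u (tᵢ + tⱼ))` positive semidefinite, while the
logarithmic weight makes `u` sublinear at infinity.

For fixed coefficients `c` and nodes `t`, put `F x = ∑ᵢⱼ cᵢ cⱼ u (tᵢ + tⱼ + x)`. A second
difference of `F` is again a quadratic form of the same kernel, hence nonnegative. So `F` is convex
and sublinear, and therefore decreasing; as `F' 0 ≤ 0` for all `c` and `t`, the kernel of `-u'` is
positive semidefinite too. The same reasoning for `u - u (· + δ)` shows that `-u'` is decreasing, in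
particular sublinear, so the step can be iterated and `u` is completely monotonic.

To remove the mollification, let the scale tend to `0`: the mollified kernels converge to `h` almost
everywhere by Lebesgue differentiation, and complete monotonicity turns pointwise bounds into
locally uniform bounds on every derivative, which makes the limit completely monotonic. The growth
bound follows by integrating the decreasing limit over `[t / 2, t]`.
-/

/-! ### Completely monotone functions -/

/-- The function `(-1)ⁿ f⁽ⁿ⁾` on `s`, the derivative being taken within `s`. -/
def alternatingDerivWithin (n : ℕ) (f : ℝ → ℝ) (s : Set ℝ) (x : ℝ) : ℝ :=
  (-1) ^ n * iteratedDerivWithin n f s x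

/-- Complete monotonicity on `s`: `f` is smooth and its derivatives alternate in sign. This is the
counterpart of Mathlib's `AbsolutelyMonotoneOn` under `x ↦ -x`. -/
def CompletelyMonotoneOn (f : ℝ → ℝ) (s : Set ℝ) : Prop :=
  ContDiffOn ℝ ∞ f s ∧ ∀ n, ∀ x ∈ s, 0 ≤ alternatingDerivWithin n f s x

lemma norm_image_sub_sub_smul_le_of_norm_hasDerivWithin_le {E : Type*} [NormedAddCommGroup E]
    [NormedSpace ℝ E] {s : Set ℝ} (hs : Convex ℝ s) {f f' f'' : ℝ → E} {C x y : ℝ}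
    (hf : ∀ z ∈ s, HasDerivWithinAt f (f' z) s z)
    (hf' : ∀ z ∈ s, HasDerivWithinAt f' (f'' z) s z) (hC : ∀ z ∈ s, ‖f'' z‖ ≤ C)
    (hx : x ∈ s) (hy : y ∈ s) :
    ‖f y - f x - (y - x) • f' x‖ ≤ C * ‖y - x‖ ^ 2 := by
  have hsub : uIcc x y ⊆ s := hs.ordConnected.uIcc_subset hx hy
  have hC0 : 0 ≤ C := (norm_nonneg _).trans (hC x hx)
  have hbound (z : ℝ) (hz : z ∈ uIcc x y) : ‖f' z - f' x‖ ≤ C * ‖y - x‖ :=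
    (hs.norm_image_sub_le_of_norm_hasDerivWithin_le hf' hC hx (hsub hz)).trans <|
      mul_le_mul_of_nonneg_left (abs_sub_left_of_mem_uIcc hz) hC0
  have hderiv (z : ℝ) (hz : z ∈ uIcc x y) :
      HasDerivWithinAt (fun w => f w - w • f' x) (f' z - f' x) (uIcc x y) z := by
    simpa using ((hf z (hsub hz)).mono hsub).fun_sub
      ((hasDerivWithinAt_id z (uIcc x y)).smul_const (f' x))
  have hmain := (convex_uIcc x y).norm_image_sub_le_of_norm_hasDerivWithin_le hderiv hbound
    left_mem_uIcc right_mem_uIcc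
  rw [sub_sub_sub_comm, ← sub_smul, mul_assoc, ← sq] at hmain
  exact hmain

namespace CompletelyMonotoneOn

variable {f : ℝ → ℝ} {s : Set ℝ} {x y z : ℝ}

lemma of_hasDerivWithinAt {v : ℕ → ℝ → ℝ} (hs : UniqueDiffOn ℝ s)
    (hnonneg : ∀ n, ∀ x ∈ s, 0 ≤ v n x)
    (hderiv : ∀ n, ∀ x ∈ s, HasDerivWithinAt (v n) (-v (n + 1) x) s x) :
    CompletelyMonotoneOn (v 0) s := by
  have hiter (n : ℕ) : EqOn (iteratedDerivWithin n (v 0) s) (fun x => (-1) ^ n * v n x) s := by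
    induction n with
    | zero => intro x _; simp
    | succ n ih =>
      intro x hx
      rw [iteratedDerivWithin_succ, derivWithin_congr ih (ih hx),
        ((hderiv n x hx).const_mul _).derivWithin (hs x hx)]
      ring
  refine ⟨contDiffOn_of_differentiableOn_deriv fun n _ => ?_, fun n x hx => ?_⟩
  · exact DifferentiableOn.congr
      (fun x hx => ((hderiv n x hx).const_mul _).differentiableWithinAt) (hiter n)
  · rw [alternatingDerivWithin, hiter n hx, ← mul_assoc, ← mul_pow]
    simpa using hnonneg n x hx

lemma hasDerivWithinAt_alternatingDerivWithin (hf : CompletelyMonotoneOn f s)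
    (hs : UniqueDiffOn ℝ s) (n : ℕ) (hx : x ∈ s) :
    HasDerivWithinAt (alternatingDerivWithin n f s)
      (-alternatingDerivWithin (n + 1) f s x) s x := by
  have hd : HasDerivWithinAt (iteratedDerivWithin n f s)
      (iteratedDerivWithin (n + 1) f s x) s x := by
    rw [iteratedDerivWithin_succ]
    exact (hf.1.differentiableOn_iteratedDerivWithin (mod_cast WithTop.coe_lt_top _) hs
      x hx).hasDerivWithinAt
  refine (hd.const_mul ((-1) ^ n)).congr_deriv ?_
  rw [alternatingDerivWithin]
  ring

lemma antitoneOn_alternatingDerivWithin (hf : CompletelyMonotoneOn f s) (hs : UniqueDiffOn ℝ s)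
    (hsc : Convex ℝ s) (n : ℕ) : AntitoneOn (alternatingDerivWithin n f s) s :=
  antitoneOn_of_hasDerivWithinAt_nonpos hsc
    (fun _ hx => (hf.hasDerivWithinAt_alternatingDerivWithin hs n hx).continuousWithinAt)
    (fun _ hx => (hf.hasDerivWithinAt_alternatingDerivWithin hs n (interior_subset hx)).mono
      interior_subset)
    fun _ hx => neg_nonpos.2 (hf.2 (n + 1) _ (interior_subset hx))

lemma antitoneOn (hf : CompletelyMonotoneOn f s) (hs : UniqueDiffOn ℝ s) (hsc : Convex ℝ s) :
    AntitoneOn f s := by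
  refine (hf.antitoneOn_alternatingDerivWithin hs hsc 0).congr fun x _ => ?_
  simp [alternatingDerivWithin]

lemma alternatingDerivWithin_succ_mul_le (hf : CompletelyMonotoneOn f s) (hs : UniqueDiffOn ℝ s)
    (hsc : Convex ℝ s) (n : ℕ) (hz : z ∈ s) (hx : x ∈ s) (hzx : z ≤ x) :
    alternatingDerivWithin (n + 1) f s x * (x - z) ≤ alternatingDerivWithin n f s z := by
  have hanti : AntitoneOn
      (fun w => alternatingDerivWithin n f s w + w * alternatingDerivWithin (n + 1) f s x)
      (s ∩ Iic x) := by
    have hderiv (w : ℝ) (hw : w ∈ s ∩ Iic x) := ((hf.hasDerivWithinAt_alternatingDerivWithin hs n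
      hw.1).mono inter_subset_left).fun_add ((hasDerivWithinAt_id w (s ∩ Iic x)).mul_const
        (alternatingDerivWithin (n + 1) f s x))
    refine antitoneOn_of_hasDerivWithinAt_nonpos (hsc.inter (convex_Iic x))
      (fun w hw => (hderiv w hw).continuousWithinAt)
      (fun w hw => (hderiv w (interior_subset hw)).mono interior_subset) fun w hw => ?_
    have hw' := interior_subset hw
    linarith [hf.antitoneOn_alternatingDerivWithin hs hsc (n + 1) hw'.1 hx hw'.2]
  have hzx' := hanti ⟨hz, hzx⟩ ⟨hx, self_mem_Iic⟩ hzx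
  have hnonneg := hf.2 n x hx
  linarith

lemma abs_alternatingDerivWithin_sub_le (hf : CompletelyMonotoneOn f s) (hs : UniqueDiffOn ℝ s)
    (hsc : Convex ℝ s) (n : ℕ) (hz : z ∈ s) (hx : x ∈ s) (hy : y ∈ s) (hzx : z ≤ x) (hzy : z ≤ y) :
    |alternatingDerivWithin n f s y - alternatingDerivWithin n f s x
        - (y - x) * -alternatingDerivWithin (n + 1) f s x| ≤
      alternatingDerivWithin (n + 2) f s z * |y - x| ^ 2 := by
  refine norm_image_sub_sub_smul_le_of_norm_hasDerivWithin_le (hsc.inter (convex_Ici z))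
    (f' := fun w => -alternatingDerivWithin (n + 1) f s w)
    (f'' := alternatingDerivWithin (n + 2) f s) (fun w hw => ?_) (fun w hw => ?_)
    (fun w hw => ?_) ⟨hx, hzx⟩ ⟨hy, hzy⟩
  · exact (hf.hasDerivWithinAt_alternatingDerivWithin hs n hw.1).mono inter_subset_left
  · simpa using ((hf.hasDerivWithinAt_alternatingDerivWithin hs (n + 1) hw.1).mono
      inter_subset_left).fun_neg
  · rw [Real.norm_of_nonneg (hf.2 _ w hw.1)]
    exact hf.antitoneOn_alternatingDerivWithin hs hsc _ hz hw.1 hw.2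

lemma exists_eventually_alternatingDerivWithin_le {ι : Type*} {F : Filter ι} {U : ι → ℝ → ℝ}
    (hs : IsOpen s) (hsc : Convex ℝ s) (hU : ∀ i, CompletelyMonotoneOn (U i) s)
    (hbdd : ∀ x ∈ s, ∃ M, ∀ᶠ i in F, U i x ≤ M) (n : ℕ) (hx : x ∈ s) :
    ∃ M, ∀ᶠ i in F, alternatingDerivWithin n (U i) s x ≤ M := by
  induction n generalizing x with
  | zero => simpa [alternatingDerivWithin] using hbdd x hx
  | succ n ih =>
    obtain ⟨z, hzx, hz⟩ := (hs.eventually_mem hx).exists_lt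
    obtain ⟨M, hM⟩ := ih hz
    refine ⟨M / (x - z), hM.mono fun i hi => ?_⟩
    rw [le_div_iff₀ (sub_pos.2 hzx)]
    exact ((hU i).alternatingDerivWithin_succ_mul_le hs.uniqueDiffOn hsc n hz hx hzx.le).trans hi

theorem exists_tendsto_ultrafilter {ι : Type*} {F : Ultrafilter ι} {U : ι → ℝ → ℝ}
    (hs : IsOpen s) (hsc : Convex ℝ s) (hU : ∀ i, CompletelyMonotoneOn (U i) s)
    (hbdd : ∀ x ∈ s, ∃ M, ∀ᶠ i in (F : Filter ι), U i x ≤ M) :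
    ∃ g, CompletelyMonotoneOn g s ∧ ∀ x ∈ s, Tendsto (fun i => U i x) F (𝓝 (g x)) := by
  have hlim (n : ℕ) (x : ℝ) : ∃ l, x ∈ s →
      Tendsto (fun i => alternatingDerivWithin n (U i) s x) F (𝓝 l) := by
    by_cases hx : x ∈ s
    · obtain ⟨M, hM⟩ := exists_eventually_alternatingDerivWithin_le hs hsc hU hbdd n hx
      obtain ⟨l, -, hl⟩ := (isCompact_Icc (a := 0) (b := M)).ultrafilter_le_nhds
        (F.map fun i => alternatingDerivWithin n (U i) s x)
        (le_principal_iff.2 (hM.mono fun i hi => ⟨(hU i).2 n x hx, hi⟩))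
      exact ⟨l, fun _ => hl⟩
    · exact ⟨0, fun h => absurd h hx⟩
  choose G hG using hlim
  refine ⟨G 0, of_hasDerivWithinAt hs.uniqueDiffOn
    (fun n x hx => ge_of_tendsto' (hG n x hx) fun i => (hU i).2 n x hx) fun n x hx => ?_,
    fun x hx => by simpa [alternatingDerivWithin] using hG 0 x hx⟩
  obtain ⟨z, hzx, hz⟩ := (hs.eventually_mem hx).exists_lt
  have hquad : (fun y => G n y - G n x - (y - x) • -G (n + 1) x) =O[𝓝 x]
      fun y => ‖y - x‖ ^ 2 := by
    refine IsBigO.of_bound (G (n + 2) z) ?_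
    filter_upwards [hs.mem_nhds hx, Ioi_mem_nhds hzx] with y hy hzy
    rw [norm_pow, norm_norm]
    exact le_of_tendsto_of_tendsto'
      (((hG n y hy).sub (hG n x hx)).sub ((hG (n + 1) x hx).neg.const_mul _)).abs
      ((hG (n + 2) z hz).mul_const _) fun i => (hU i).abs_alternatingDerivWithin_sub_le
        hs.uniqueDiffOn hsc n hz hx hy hzx.le (le_of_lt hzy)
  exact (hasDerivAt_iff_isLittleO.2 <|
    hquad.trans_isLittleO (isLittleO_pow_sub_sub x one_lt_two)).hasDerivWithinAt

theorem exists_ae_eq_of_ae_tendsto {U : ℕ → ℝ → ℝ} {h : ℝ → ℝ} (hs : IsOpen s)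
    (hsc : Convex ℝ s) (hU : ∀ n, CompletelyMonotoneOn (U n) s)
    (hlim : ∀ᵐ x ∂volume.restrict s, Tendsto (fun n => U n x) atTop (𝓝 (h x))) :
    ∃ g, CompletelyMonotoneOn g s ∧ h =ᵐ[volume.restrict s] g := by
  have hF : (hyperfilter ℕ : Filter ℕ) ≤ atTop := Nat.hyperfilter_le_atTop
  rw [ae_restrict_iff' hs.measurableSet] at hlim
  have hbdd (x : ℝ) (hx : x ∈ s) : ∃ M, ∀ᶠ n in (hyperfilter ℕ : Filter ℕ), U n x ≤ M := by
    obtain ⟨z, hzx, hz⟩ := (hs.eventually_mem hx).exists_lt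
    have hfreq : ∃ᵐ y, y ∈ Ioo z x := by
      rw [frequently_ae_mem_iff, Real.volume_Ioo]
      simpa using hzx
    obtain ⟨y, hy, hylim⟩ := (hfreq.and_eventually hlim).exists
    have hys : y ∈ s := hsc.ordConnected.out hz hx (Ioo_subset_Icc_self hy)
    refine ⟨h y + 1, ((hylim hys).mono_left hF).eventually_le_const (lt_add_one _) |>.mono
      fun n hn => ((hU n).antitoneOn hs.uniqueDiffOn hsc hys hx hy.2.le).trans hn⟩
  obtain ⟨g, hg, hgU⟩ := exists_tendsto_ultrafilter hs hsc hU hbdd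
  refine ⟨g, hg, (ae_restrict_iff' hs.measurableSet).2 ?_⟩
  filter_upwards [hlim] with x hx hxs
  exact tendsto_nhds_unique ((hx hxs).mono_left hF) (hgU x hxs)

end CompletelyMonotoneOn

/-! ### Positive semidefinite Hankel kernels -/

lemma antitoneOn_Ici_of_secondDiff_nonneg {f : ℝ → ℝ} {a : ℝ}
    (hdiff : ∀ x δ, a ≤ x → 0 < δ → 0 ≤ f x - 2 * f (x + δ) + f (x + 2 * δ))
    (hf : f =o[atTop] (id : ℝ → ℝ)) : AntitoneOn f (Ici a) := by
  intro x hx y _ hxy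
  obtain rfl | hlt := hxy.eq_or_lt
  · rfl
  set δ := y - x with hδ
  have hδ0 : 0 < δ := sub_pos.2 hlt
  have hincr (k : ℕ) : f y - f x ≤ f (x + δ * (k + 1)) - f (x + δ * k) := by
    induction k with
    | zero => simp [hδ]
    | succ k ih =>
      have hconv := hdiff (x + δ * k) δ (le_add_of_le_of_nonneg hx (by positivity)) hδ0
      push_cast
      ring_nf at ih hconv ⊢
      linarith
  have hlinear (k : ℕ) : k * (f y - f x) ≤ f (x + δ * k) - f x := by
    induction k with
    | zero => simp
    | succ k ih => push_cast; linarith [hincr k]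
  have hsub : (fun k : ℕ => f (x + δ * k) - f x) =o[atTop] fun k : ℕ => (k : ℝ) := by
    have hid : (fun k : ℕ => x + δ * k) =O[atTop] fun k : ℕ => (k : ℝ) :=
      ((isLittleO_const_id_atTop x).comp_tendsto tendsto_natCast_atTop_atTop).isBigO.add
        (isBigO_const_mul_self δ _ _)
    exact ((hf.comp_tendsto <| tendsto_atTop_add_const_left _ x <|
      tendsto_natCast_atTop_atTop.const_mul_atTop hδ0).trans_isBigO hid).sub
        ((isLittleO_const_id_atTop (f x)).comp_tendsto tendsto_natCast_atTop_atTop)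
  refine sub_nonpos.1 (ge_of_tendsto hsub.tendsto_div_nhds_zero ?_)
  filter_upwards [eventually_gt_atTop 0] with k hk
  rw [le_div_iff₀' (Nat.cast_pos.2 hk)]
  exact hlinear k

lemma isLittleO_id_atTop_of_antitoneOn_of_nonneg {f : ℝ → ℝ} {a : ℝ} (hf : AntitoneOn f (Ioi a))
    (hnonneg : ∀ x ∈ Ioi a, 0 ≤ f x) : f =o[atTop] (id : ℝ → ℝ) := by
  refine IsBigO.trans_isLittleO (IsBigO.of_bound 1 ?_) (isLittleO_const_id_atTop (f (a + 1)))
  filter_upwards [eventually_ge_atTop (a + 1)] with x hx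
  have ha : a < a + 1 := lt_add_one a
  rw [one_mul, Real.norm_of_nonneg (hnonneg _ (ha.trans_le hx)), Real.norm_of_nonneg (hnonneg _ ha)]
  exact hf ha (ha.trans_le hx) hx

/-- The value at `c` of the quadratic form with Hankel matrix `(u (tᵢ + tⱼ))`. -/
def hankelSum {ι : Type*} [Fintype ι] (u : ℝ → ℝ) (c t : ι → ℝ) : ℝ :=
  ∑ i, ∑ j, c i * c j * u (t i + t j)

/-- Positive semidefiniteness of the Hankel kernel `(s, t) ↦ u (s + t)` on `(0, ∞)`: the discrete
counterpart of positivity of the Hankel quadratic form. -/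
def HankelPSD (u : ℝ → ℝ) : Prop :=
  ∀ (ι : Type) [Fintype ι] (c t : ι → ℝ), (∀ i, 0 < t i) → 0 ≤ hankelSum u c t

section hankelSum

variable {ι : Type*} [Fintype ι] {u v : ℝ → ℝ} {c t : ι → ℝ}

lemma hankelSum_neg : hankelSum (fun x => -u x) c t = -hankelSum u c t := by
  simp only [hankelSum, mul_neg, Finset.sum_neg_distrib]

lemma hankelSum_sub :
    hankelSum (fun x => u x - v x) c t = hankelSum u c t - hankelSum v c t := by
  simp only [hankelSum, mul_sub, Finset.sum_sub_distrib]

lemma hankelSum_secondDiff (x δ : ℝ) :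
    hankelSum (fun y => u (y + x)) c t - 2 * hankelSum (fun y => u (y + (x + δ))) c t
        + hankelSum (fun y => u (y + (x + 2 * δ))) c t =
      hankelSum u (Sum.elim c (-c))
        (Sum.elim (fun i => t i + x / 2) fun i => t i + (x / 2 + δ)) := by
  simp only [hankelSum, Fintype.sum_sum_type, Sum.elim_inl, Sum.elim_inr, Pi.neg_apply,
    Finset.mul_sum, ← Finset.sum_add_distrib, ← Finset.sum_sub_distrib]
  refine Finset.sum_congr rfl fun i _ => Finset.sum_congr rfl fun j _ => ?_
  ring_nf

lemma isLittleO_hankelSum_add (hu : u =o[atTop] (id : ℝ → ℝ)) :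
    (fun x => hankelSum (fun y => u (y + x)) c t) =o[atTop] (id : ℝ → ℝ) := by
  refine .fun_sum fun i _ => .fun_sum fun j _ => .const_mul_left ?_ _
  refine (hu.comp_tendsto (tendsto_atTop_add_const_left _ (t i + t j) tendsto_id)).trans_isBigO ?_
  exact (isLittleO_const_id_atTop _).isBigO.add (isBigO_refl _ _)

lemma hasDerivAt_hankelSum_add (hu : ∀ x ∈ Ioi 0, DifferentiableAt ℝ u x) (ht : ∀ i, 0 < t i) :
    HasDerivAt (fun x => hankelSum (fun y => u (y + x)) c t) (hankelSum (deriv u) c t) 0 := by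
  refine .fun_sum fun i _ => .fun_sum fun j _ => .const_mul _ (.comp_const_add _ _ ?_)
  rw [add_zero]
  exact (hu _ (add_pos (ht i) (ht j))).hasDerivAt

end hankelSum

namespace HankelPSD

variable {u : ℝ → ℝ} {x δ : ℝ}

lemma nonneg (hu : HankelPSD u) (hx : 0 < x) : 0 ≤ u x := by
  simpa [hankelSum] using hu Unit 1 (fun _ => x / 2) fun _ => half_pos hx

lemma antitoneOn_hankelSum_add (hu : HankelPSD u) (hlim : u =o[atTop] (id : ℝ → ℝ)) {ι : Type}
    [Fintype ι] {c t : ι → ℝ} (ht : ∀ i, 0 < t i) :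
    AntitoneOn (fun x => hankelSum (fun y => u (y + x)) c t) (Ici 0) := by
  refine antitoneOn_Ici_of_secondDiff_nonneg (fun x δ hx hδ => ?_) (isLittleO_hankelSum_add hlim)
  rw [hankelSum_secondDiff]
  refine hu _ _ _ ?_
  rintro (i | i) <;> have := ht i <;> simp only [Sum.elim_inl, Sum.elim_inr] <;> positivity

lemma sub_comp_add_right (hu : HankelPSD u) (hlim : u =o[atTop] (id : ℝ → ℝ)) (hδ : 0 ≤ δ) :
    HankelPSD fun x => u x - u (x + δ) := by
  intro ι _ c t ht
  rw [hankelSum_sub, sub_nonneg]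
  simpa using hu.antitoneOn_hankelSum_add hlim ht self_mem_Ici hδ hδ

lemma antitoneOn (hu : HankelPSD u) (hlim : u =o[atTop] (id : ℝ → ℝ)) :
    AntitoneOn u (Ioi 0) := by
  intro x hx y _ hxy
  simpa using (hu.sub_comp_add_right hlim (sub_nonneg.2 hxy)).nonneg hx

lemma neg_deriv (hu : HankelPSD u) (hlim : u =o[atTop] (id : ℝ → ℝ))
    (hdiff : ∀ x ∈ Ioi 0, DifferentiableAt ℝ u x) : HankelPSD fun x => -deriv u x := by
  intro ι _ c t ht
  rw [hankelSum_neg, neg_nonneg]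
  exact (hasDerivAt_hankelSum_add hdiff ht).hasDerivWithinAt.nonpos_of_antitoneOn
    (uniqueDiffOn_Ici 0 0 self_mem_Ici).accPt (hu.antitoneOn_hankelSum_add hlim ht)

lemma antitoneOn_neg_deriv (hu : HankelPSD u) (hlim : u =o[atTop] (id : ℝ → ℝ))
    (hdiff : ∀ x ∈ Ioi 0, DifferentiableAt ℝ u x) :
    AntitoneOn (fun x => -deriv u x) (Ioi 0) := by
  intro x hx y _ hxy
  set δ := y - x
  have hδ : 0 ≤ δ := sub_nonneg.2 hxy
  have hincr : HankelPSD fun x => u x - u (x + δ) := hu.sub_comp_add_right hlim hδ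
  have hincr_lim : (fun x => u x - u (x + δ)) =o[atTop] (id : ℝ → ℝ) := by
    refine IsBigO.trans_isLittleO (IsBigO.of_bound 1 ?_) hlim
    filter_upwards [eventually_gt_atTop 0] with x hx
    rw [one_mul, Real.norm_of_nonneg (hincr.nonneg hx), Real.norm_of_nonneg (hu.nonneg hx)]
    linarith [hu.nonneg (add_pos_of_pos_of_nonneg hx hδ)]
  have hderiv : HasDerivAt (fun x => u x - u (x + δ)) (deriv u x - deriv u (x + δ)) x :=
    (hdiff x hx).hasDerivAt.fun_sub
      ((hdiff _ (add_pos_of_pos_of_nonneg hx hδ)).hasDerivAt.comp_add_const x δ)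
  have hle := hderiv.hasDerivWithinAt.nonpos_of_antitoneOn (uniqueDiffOn_Ioi 0 x hx).accPt
    (hincr.antitoneOn hincr_lim)
  simpa [δ] using hle

lemma isLittleO_neg_deriv (hu : HankelPSD u) (hlim : u =o[atTop] (id : ℝ → ℝ))
    (hdiff : ∀ x ∈ Ioi 0, DifferentiableAt ℝ u x) :
    (fun x => -deriv u x) =o[atTop] (id : ℝ → ℝ) :=
  isLittleO_id_atTop_of_antitoneOn_of_nonneg (hu.antitoneOn_neg_deriv hlim hdiff) fun _ hx =>
    (hu.neg_deriv hlim hdiff).nonneg hx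

theorem completelyMonotoneOn (hu : HankelPSD u) (hlim : u =o[atTop] (id : ℝ → ℝ))
    (hsmooth : ContDiffOn ℝ ∞ u (Ioi 0)) : CompletelyMonotoneOn u (Ioi 0) := by
  set v : ℕ → ℝ → ℝ := fun n => (fun w x => -deriv w x)^[n] u
  have hsucc (n : ℕ) : v (n + 1) = fun x => -deriv (v n) x := iterate_succ_apply' _ n u
  have hdiff {w : ℝ → ℝ} (hw : ContDiffOn ℝ ∞ w (Ioi 0)) (x : ℝ) (hx : x ∈ Ioi 0) :
      DifferentiableAt ℝ w x :=
    (hw.differentiableOn (by simp)).differentiableAt (isOpen_Ioi.mem_nhds hx)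
  have hiter (n : ℕ) :
      HankelPSD (v n) ∧ v n =o[atTop] (id : ℝ → ℝ) ∧ ContDiffOn ℝ ∞ (v n) (Ioi 0) := by
    induction n with
    | zero => exact ⟨hu, hlim, hsmooth⟩
    | succ n ih =>
      obtain ⟨hpsd, hlim, hsmooth⟩ := ih
      rw [hsucc]
      exact ⟨hpsd.neg_deriv hlim (hdiff hsmooth), hpsd.isLittleO_neg_deriv hlim (hdiff hsmooth),
        ((contDiffOn_infty_iff_deriv_of_isOpen isOpen_Ioi).1 hsmooth).2.neg⟩
  refine .of_hasDerivWithinAt (v := v) (uniqueDiffOn_Ioi 0)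
    (fun n _ hx => (hiter n).1.nonneg hx) fun n x hx => ?_
  rw [hsucc, neg_neg]
  exact (hdiff (hiter n).2.2 x hx).hasDerivAt.hasDerivWithinAt

end HankelPSD

/-! ### Mollification of Hankel kernels -/

/-- The correlation of `k` with `φ`, i.e. the convolution of `k` with `φ (-·)`. Correlating in both
variables of a Hankel kernel `(s, t) ↦ k (s + t)` produces again a Hankel kernel. -/
def correlate (k φ : ℝ → ℝ) (x : ℝ) : ℝ :=
  ∫ s, k (x + s) * φ s

section correlate

variable {k l φ : ℝ → ℝ} {x : ℝ}

lemma correlate_eq_convolution :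
    correlate k φ = convolution k (fun y => φ (-y)) (ContinuousLinearMap.mul ℝ ℝ) volume := by
  ext x
  rw [convolution_def, ← integral_add_left_eq_self _ x]
  simp [correlate]

lemma contDiff_correlate {n : ℕ∞} (hk : LocallyIntegrable k) (hφ : ContDiff ℝ n φ)
    (hφc : HasCompactSupport φ) : ContDiff ℝ n (correlate k φ) := by
  rw [correlate_eq_convolution]
  exact (hφc.comp_homeomorph (Homeomorph.neg ℝ)).contDiff_convolution_right _ hk
    (hφ.comp contDiff_neg)

lemma integrable_comp_add_mul (hk : LocallyIntegrable k) (hφ : Continuous φ)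
    (hφc : HasCompactSupport φ) (x : ℝ) : Integrable fun s => k (x + s) * φ s := by
  have hshift : Integrable fun y => k y * φ (y - x) :=
    hk.integrable_smul_right_of_hasCompactSupport (by fun_prop)
      (hφc.comp_homeomorph (Homeomorph.subRight x))
  simpa using hshift.comp_add_left x

lemma correlate_translate (a x : ℝ) :
    correlate k (fun s => φ (s - a)) x = correlate k φ (x + a) := by
  rw [correlate, ← integral_add_right_eq_self _ a]
  simp only [correlate, add_sub_cancel_right, add_assoc, add_comm a]

lemma correlate_congr (h : ∀ s ∈ support φ, k (x + s) = l (x + s)) :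
    correlate k φ x = correlate l φ x := by
  refine integral_congr_ae (.of_forall fun s => ?_)
  by_cases hs : φ s = 0
  · simp [hs]
  · simp [h s hs]

lemma correlate_sub_const (hk : LocallyIntegrable k) (hφ : Continuous φ)
    (hφc : HasCompactSupport φ) (hφ1 : ∫ s, φ s = 1) (r : ℝ) :
    correlate (fun y => k y - r) φ = fun x => correlate k φ x - r := by
  ext x
  simp only [correlate, sub_mul]
  rw [integral_sub (integrable_comp_add_mul hk hφ hφc x)
    ((integrable_of_integral_eq_one hφ1).const_mul r), integral_const_mul, hφ1, mul_one]

lemma abs_correlate_le_of_abs_le {C : ℝ} (hφ : 0 ≤ φ) (hφ1 : ∫ s, φ s = 1)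
    (hC : ∀ s ∈ support φ, |k (x + s)| ≤ C) : |correlate k φ x| ≤ C := by
  have hbound : |correlate k φ x| ≤ ∫ s, C * φ s := by
    rw [correlate, ← Real.norm_eq_abs]
    refine norm_integral_le_of_norm_le ((integrable_of_integral_eq_one hφ1).const_mul C)
      (.of_forall fun s => ?_)
    by_cases hs : φ s = 0
    · simp [hs]
    · rw [norm_mul, Real.norm_of_nonneg (hφ s)]
      exact mul_le_mul_of_nonneg_right (hC s hs) (hφ s)
  rwa [integral_const_mul, hφ1, mul_one] at hbound

lemma abs_correlate_le_mul_setIntegral {a b B : ℝ} (hk : LocallyIntegrable k)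
    (hsupp : support φ ⊆ Icc a b) (hB : ∀ s, |φ s| ≤ B) (x : ℝ) :
    |correlate k φ x| ≤ B * ∫ y in Icc (x + a) (x + b), |k y| := by
  have hpre : (fun s => x + s) ⁻¹' Icc (x + a) (x + b) = Icc a b := by simp
  have hmp := measurePreserving_add_left volume x
  have hemb := measurableEmbedding_addLeft x
  have hint : IntegrableOn (fun s => |k (x + s)|) (Icc a b) := by
    rw [← hpre]
    exact (hmp.integrableOn_comp_preimage hemb).2 (hk.integrableOn_isCompact isCompact_Icc).abs
  rw [← hmp.setIntegral_preimage_emb hemb, hpre, ← integral_const_mul, correlate,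
    ← Real.norm_eq_abs,
    ← setIntegral_eq_integral_of_forall_compl_eq_zero (s := Icc a b)
      fun s hs => by rw [notMem_support.1 fun h => hs (hsupp h), mul_zero]]
  refine norm_integral_le_of_norm_le (hint.const_mul B) (.of_forall fun s => ?_)
  rw [norm_mul, mul_comm]
  exact mul_le_mul_of_nonneg_right (hB s) (norm_nonneg _)

variable {ι : Type*} [Fintype ι]

lemma correlate_sum_translate_left (hk : LocallyIntegrable k) (hφ : Continuous φ)
    (hφc : HasCompactSupport φ) (c a : ι → ℝ) (x : ℝ) :
    correlate (fun y => ∑ i, c i * k (y + a i)) φ x = ∑ i, c i * correlate k φ (x + a i) := by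
  simp only [correlate, Finset.sum_mul, ← integral_const_mul]
  rw [integral_finsetSum]
  · simp only [mul_assoc, add_right_comm x]
  · intro i _
    simpa only [mul_assoc, add_right_comm x] using
      (integrable_comp_add_mul hk hφ hφc (x + a i)).const_mul (c i)

lemma correlate_sum_translate_right (hk : LocallyIntegrable k) (hφ : Continuous φ)
    (hφc : HasCompactSupport φ) (c a : ι → ℝ) (x : ℝ) :
    correlate k (fun s => ∑ i, c i * φ (s - a i)) x = ∑ i, c i * correlate k φ (x + a i) := by
  simp only [← correlate_translate]
  simp only [correlate, Finset.mul_sum, mul_left_comm _ (c _), ← integral_const_mul]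
  exact integral_finsetSum _ fun i _ => (integrable_comp_add_mul hk (by fun_prop)
    (hφc.comp_homeomorph (Homeomorph.subRight (a i))) x).const_mul (c i)

end correlate

/-- The kernel `k` mollified by `φ` in each of the two variables of `(s, t) ↦ k (s + t)`. -/
def hankelMollify (k φ : ℝ → ℝ) : ℝ → ℝ :=
  correlate (correlate k φ) φ

lemma hankelMollify_sum_translate {ι : Type*} [Fintype ι] {k φ : ℝ → ℝ} (hk : LocallyIntegrable k)
    (hφ : Continuous φ) (hφc : HasCompactSupport φ) (c t : ι → ℝ) :
    hankelMollify k (fun s => ∑ i, c i * φ (s - t i)) 0 = hankelSum (hankelMollify k φ) c t := by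
  have hcont : Continuous (correlate k φ) :=
    (contDiff_correlate (n := 0) hk (contDiff_zero.2 hφ) hφc).continuous
  have hinner : correlate k (fun s => ∑ i, c i * φ (s - t i)) =
      fun x => ∑ i, c i * correlate k φ (x + t i) :=
    funext (correlate_sum_translate_right hk hφ hφc c t)
  have hsum : Continuous fun x => ∑ i, c i * correlate k φ (x + t i) := by fun_prop
  rw [hankelMollify, hinner, correlate_sum_translate_right hsum.locallyIntegrable hφ hφc]
  simp only [correlate_sum_translate_left hcont.locallyIntegrable hφ hφc, hankelSum, hankelMollify,
    Finset.mul_sum, mul_assoc, zero_add]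

lemma hankelQF_ofReal {h f : ℝ → ℝ} {a : ℝ} (ha : 0 < a) (hf : support f ⊆ Ici a) :
    hankelQF (fun t => (h t : ℂ)) (fun t => (f t : ℂ)) =
      (hankelMollify ((Ici a).indicator h) f 0 : ℝ) := by
  have hf0 (t : ℝ) (ht : t ∉ Ioi 0) : f t = 0 :=
    notMem_support.1 fun hmem => ht (ha.trans_le (hf hmem))
  rw [hankelQF, setIntegral_eq_integral_of_forall_compl_eq_zero fun t ht => by simp [hf0 t ht],
    hankelMollify, correlate, ← integral_complex_ofReal]
  refine integral_congr_ae (.of_forall fun t => ?_)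
  beta_reduce
  by_cases ht : f t = 0
  · simp [ht]
  have hat : a ≤ t := hf ht
  rw [setIntegral_eq_integral_of_forall_compl_eq_zero fun s hs => by simp [hf0 s hs],
    integral_mul_const, Complex.conj_ofReal, Complex.ofReal_mul, zero_add, correlate,
    ← integral_complex_ofReal]
  congr 1
  refine integral_congr_ae (.of_forall fun s => ?_)
  by_cases hs : f s = 0
  · simp [hs]
  have has : a ≤ s := hf hs
  simp [indicator_of_mem (mem_Ici.2 (by linarith) : t + s ∈ Ici a)]

lemma isTestFun_ofReal {f : ℝ → ℝ} {a : ℝ} (ha : 0 < a) (hf : ContDiff ℝ ∞ f)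
    (hfc : HasCompactSupport f) (hsupp : support f ⊆ Ici a) : IsTestFun fun t => (f t : ℂ) := by
  refine ⟨Complex.ofRealCLM.contDiff.comp hf, hfc.comp_left Complex.ofReal_zero, ?_⟩
  refine (closure_minimal (fun t ht => ?_) isClosed_Ici).trans (Ici_subset_Ioi.2 ha)
  exact hsupp fun h0 => ht (by simp [h0])

lemma locallyIntegrable_indicator_Ici {h : ℝ → ℝ} (hloc : LocallyIntegrableOn h (Ioi 0)) {a : ℝ}
    (ha : 0 < a) : LocallyIntegrable ((Ici a).indicator h) := by
  refine locallyIntegrable_iff.2 fun K hK => ?_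
  rw [IntegrableOn, integrable_indicator_iff measurableSet_Ici, IntegrableOn,
    Measure.restrict_restrict measurableSet_Ici]
  exact hloc.integrableOn_compact_subset (inter_subset_left.trans (Ici_subset_Ioi.2 ha))
    (hK.inter_left isClosed_Ici)

theorem hankelPSD_hankelMollify {h φ : ℝ → ℝ} {a : ℝ} (hloc : LocallyIntegrableOn h (Ioi 0))
    (hpos : ∀ f : ℝ → ℂ, IsTestFun f → 0 ≤ hankelQF (fun t => (h t : ℂ)) f) (ha : 0 < a)
    (hφ : ContDiff ℝ ∞ φ) (hφc : HasCompactSupport φ) (hsupp : support φ ⊆ Ici a) :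
    HankelPSD (hankelMollify ((Ici a).indicator h) φ) := by
  intro ι _ c t ht
  set f : ℝ → ℝ := fun s => ∑ i, c i * φ (s - t i)
  have hf : ContDiff ℝ ∞ f := by fun_prop
  have hfc : HasCompactSupport f := by
    have : f = ∑ i, fun s => c i * φ (s - t i) := by ext; simp [f]
    rw [this]
    exact .finset_sum fun i _ => (hφc.comp_homeomorph (Homeomorph.subRight (t i))).mul_left
  have hfsupp : support f ⊆ Ici a := by
    intro s hs
    obtain ⟨i, -, hi⟩ := Finset.exists_ne_zero_of_sum_ne_zero hs
    have hsi : a ≤ s - t i := hsupp (right_ne_zero_of_mul hi)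
    exact mem_Ici.2 (by linarith [ht i])
  rw [← hankelMollify_sum_translate (locallyIntegrable_indicator_Ici hloc ha) hφ.continuous hφc,
    ← Complex.zero_le_real, ← hankelQF_ofReal ha hfsupp]
  exact hpos _ (isTestFun_ofReal ha hf hfc hfsupp)

/-- A smooth probability density at scale `ε`, supported at distance about `ε` to the right of `0`
so that mollifying at a point of `(0, ∞)` only uses values further to the right. -/
structure IsMollifier (ε : ℝ) (φ : ℝ → ℝ) : Prop where
  pos : 0 < ε
  contDiff : ContDiff ℝ ∞ φ
  nonneg : 0 ≤ φ
  support_subset : support φ ⊆ Icc ε (2 * ε)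
  le_two_div : ∀ s, φ s ≤ 2 / ε
  integral_eq_one : ∫ s, φ s = 1

lemma exists_isMollifier {ε : ℝ} (hε : 0 < ε) : ∃ φ, IsMollifier ε φ := by
  let b : ContDiffBump (3 * ε / 2) := ⟨ε / 4, ε / 2, by positivity, by linarith⟩
  have hsupp : support (b.normed volume) ⊆ Icc ε (2 * ε) := by
    rw [b.support_normed_eq, Real.ball_eq_Ioo]
    refine Ioo_subset_Icc_self.trans (Icc_subset_Icc ?_ ?_) <;> dsimp only [b] <;> linarith
  have hle (s : ℝ) : b.normed volume s ≤ 2 / ε := by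
    refine (b.normed_le_div_measure_closedBall_rIn volume s).trans_eq ?_
    rw [Real.volume_real_closedBall b.rIn_pos.le]
    dsimp only [b]
    field_simp
    norm_num
  exact ⟨b.normed volume, hε, b.contDiff_normed, b.nonneg_normed, hsupp, hle, b.integral_normed⟩

namespace IsMollifier

variable {k φ : ℝ → ℝ} {ε x : ℝ}

lemma hasCompactSupport (hφ : IsMollifier ε φ) : HasCompactSupport φ :=
  .of_support_subset_isCompact isCompact_Icc hφ.support_subset

lemma contDiff_hankelMollify (hφ : IsMollifier ε φ) (hk : LocallyIntegrable k) :
    ContDiff ℝ ∞ (hankelMollify k φ) := by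
  have hcont := (contDiff_correlate hk hφ.contDiff hφ.hasCompactSupport).continuous
  exact contDiff_correlate hcont.locallyIntegrable hφ.contDiff hφ.hasCompactSupport

lemma hankelMollify_congr (hφ : IsMollifier ε φ) {l : ℝ → ℝ}
    (h : ∀ y ∈ Icc (x + 2 * ε) (x + 4 * ε), k y = l y) :
    hankelMollify k φ x = hankelMollify l φ x := by
  refine correlate_congr fun t ht => correlate_congr fun s hs => h _ ?_
  obtain ⟨ht₁, ht₂⟩ := hφ.support_subset ht
  obtain ⟨hs₁, hs₂⟩ := hφ.support_subset hs
  constructor <;> linarith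

lemma abs_hankelMollify_le (hφ : IsMollifier ε φ) (hk : LocallyIntegrable k) (x : ℝ) :
    |hankelMollify k φ x| ≤ 2 / ε * ∫ y in Icc x (x + 4 * ε), |k y| := by
  have hε := hφ.pos
  refine abs_correlate_le_of_abs_le hφ.nonneg hφ.integral_eq_one fun t ht => ?_
  obtain ⟨ht₁, ht₂⟩ := hφ.support_subset ht
  have hsub : Icc (x + t + ε) (x + t + 2 * ε) ⊆ Icc x (x + 4 * ε) :=
    Icc_subset_Icc (by linarith) (by linarith)
  refine (abs_correlate_le_mul_setIntegral hk hφ.support_subset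
    (fun s => (abs_of_nonneg (hφ.nonneg s)).trans_le (hφ.le_two_div s)) (x + t)).trans ?_
  gcongr
  · exact .of_forall fun y => abs_nonneg _
  · exact (hk.integrableOn_isCompact isCompact_Icc).abs

lemma hankelMollify_sub_const (hφ : IsMollifier ε φ) (hk : LocallyIntegrable k) (r : ℝ) :
    hankelMollify (fun y => k y - r) φ = fun x => hankelMollify k φ x - r := by
  have hcont := hφ.contDiff.continuous
  have hcont' := (contDiff_correlate hk hφ.contDiff hφ.hasCompactSupport).continuous
  rw [hankelMollify, correlate_sub_const hk hcont hφ.hasCompactSupport hφ.integral_eq_one,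
    correlate_sub_const hcont'.locallyIntegrable hcont hφ.hasCompactSupport hφ.integral_eq_one,
    hankelMollify]

lemma abs_hankelMollify_sub_le_average (hφ : IsMollifier ε φ) (hk : LocallyIntegrable k)
    (x r : ℝ) :
    |hankelMollify k φ x - r| ≤ 16 * ⨍ y in Metric.closedBall x (4 * ε), |k y - r| := by
  have hε := hφ.pos
  have hloc : LocallyIntegrable fun y => k y - r := hk.sub (locallyIntegrable_const r)
  have hbound := hφ.abs_hankelMollify_le hloc x
  rw [hφ.hankelMollify_sub_const hk] at hbound
  calc
    _ ≤ 2 / ε * ∫ y in Icc x (x + 4 * ε), |k y - r| := hbound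
    _ ≤ 2 / ε * ∫ y in Metric.closedBall x (4 * ε), |k y - r| := by
      gcongr
      · exact .of_forall fun y => abs_nonneg _
      · exact (hloc.integrableOn_isCompact (isCompact_closedBall _ _)).abs
      · rw [Real.closedBall_eq_Icc]
        exact Icc_subset_Icc_left (by linarith)
    _ = _ := by
      rw [setAverage_eq, Real.volume_real_closedBall (by positivity), smul_eq_mul]
      field_simp
      ring

end IsMollifier

theorem ae_tendsto_hankelMollify {ι : Type*} {l : Filter ι} {ε : ι → ℝ} {φ : ι → ℝ → ℝ} {k : ℝ → ℝ}
    (hφ : ∀ i, IsMollifier (ε i) (φ i)) (hε : Tendsto ε l (𝓝 0)) (hk : LocallyIntegrable k) :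
    ∀ᵐ x, Tendsto (fun i => hankelMollify k (φ i) x) l (𝓝 (k x)) := by
  have hpos (i : ι) : 0 < 4 * ε i := mul_pos four_pos (hφ i).pos
  filter_upwards [IsUnifLocDoublingMeasure.ae_tendsto_average_norm_sub volume hk 1] with x hx
  have haverage : Tendsto (fun i => ⨍ y in Metric.closedBall x (4 * ε i), ‖k y - k x‖) l (𝓝 0) :=
    hx (fun _ => x) _
      (tendsto_nhdsWithin_iff.2 ⟨by simpa using hε.const_mul 4, .of_forall hpos⟩)
      (.of_forall fun i => Metric.mem_closedBall_self (mul_pos one_pos (hpos i)).le)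
  refine tendsto_iff_norm_sub_tendsto_zero.2 <| squeeze_zero (fun _ => norm_nonneg _)
    (fun i => (hφ i).abs_hankelMollify_sub_le_average hk x (k x)) ?_
  simpa using haverage.const_mul 16

theorem ae_tendsto_hankelMollify_indicator {ε : ℕ → ℝ} {φ : ℕ → ℝ → ℝ} {h : ℝ → ℝ}
    (hφ : ∀ n, IsMollifier (ε n) (φ n)) (hε : Tendsto ε atTop (𝓝 0))
    (hloc : LocallyIntegrableOn h (Ioi 0)) :
    ∀ᵐ x ∂volume.restrict (Ioi 0),
      Tendsto (fun n => hankelMollify ((Ici (ε n)).indicator h) (φ n) x) atTop (𝓝 (h x)) := by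
  have hall : ∀ᵐ x, ∀ m, Tendsto (fun n => hankelMollify ((Ici (ε m)).indicator h) (φ n) x) atTop
      (𝓝 ((Ici (ε m)).indicator h x)) :=
    ae_all_iff.2 fun m =>
      ae_tendsto_hankelMollify hφ hε (locallyIntegrable_indicator_Ici hloc (hφ m).pos)
  rw [ae_restrict_iff' measurableSet_Ioi]
  filter_upwards [hall] with x hx (hx0 : 0 < x)
  obtain ⟨m, hm⟩ := (hε.eventually_lt_const hx0).exists
  rw [← indicator_of_mem (mem_Ici.2 hm.le) h]
  refine (hx m).congr fun n => (hφ n).hankelMollify_congr fun y hy => ?_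
  have hn := (hφ n).pos
  rw [indicator_of_mem (mem_Ici.2 (by linarith [hy.1])),
    indicator_of_mem (mem_Ici.2 (by linarith [hy.1]))]

/-! ### Logarithmic weights -/

lemma setIntegral_abs_le_mul_setIntegral {α : Type*} [MeasurableSpace α] {μ : Measure α}
    {s t : Set α} {f w : α → ℝ} {M : ℝ} (hs : MeasurableSet s) (hst : s ⊆ t)
    (hfw : IntegrableOn (fun x => |f x| * w x) t μ) (hw : ∀ x, 0 ≤ w x) (hM : 0 ≤ M)
    (hMw : ∀ x ∈ s, 1 ≤ M * w x) :
    ∫ x in s, |f x| ∂μ ≤ M * ∫ x in t, |f x| * w x ∂μ := by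
  calc
    ∫ x in s, |f x| ∂μ ≤ ∫ x in s, M * (|f x| * w x) ∂μ := by
      refine integral_mono_of_nonneg (.of_forall fun x => abs_nonneg _)
        ((hfw.mono_set hst).const_mul M) ((ae_restrict_iff' hs).2 (.of_forall fun x hx => ?_))
      beta_reduce
      rw [mul_left_comm]
      exact le_mul_of_one_le_right (abs_nonneg _) (hMw x hx)
    _ = M * ∫ x in s, |f x| * w x ∂μ := integral_const_mul _ _
    _ ≤ M * ∫ x in t, |f x| * w x ∂μ := by
      gcongr
      exact .of_forall fun x => mul_nonneg (abs_nonneg _) (hw x)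

section LogWeight

variable {h g : ℝ → ℝ} {κ : ℝ}

lemma isLittleO_one_add_abs_log_rpow_id (κ : ℝ) :
    (fun y : ℝ => (1 + |Real.log y|) ^ κ) =o[atTop] (id : ℝ → ℝ) := by
  have hexp : Tendsto (fun y : ℝ => Real.exp 1 * y) atTop atTop :=
    tendsto_id.const_mul_atTop (Real.exp_pos 1)
  have hlog := (isLittleO_log_rpow_rpow_atTop κ one_pos).comp_tendsto hexp
  simp only [comp_def, Real.rpow_one] at hlog
  refine (hlog.trans_isBigO (isBigO_const_mul_self _ _ _)).congr' ?_ .rfl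
  filter_upwards [eventually_ge_atTop 1] with y hy
  rw [Real.log_mul (Real.exp_ne_zero 1) (by linarith), Real.log_exp,
    abs_of_nonneg (Real.log_nonneg hy)]

lemma one_le_mul_one_add_abs_log_rpow_neg {M y : ℝ} (hM : (1 + |Real.log y|) ^ κ ≤ M) :
    1 ≤ M * (1 + |Real.log y|) ^ (-κ) := by
  rwa [Real.rpow_neg (by positivity), ← div_eq_mul_inv, one_le_div (by positivity)]

lemma isLittleO_setIntegral_Icc_add
    (hκ : IntegrableOn (fun t => |h t| * (1 + |Real.log t|) ^ (-κ)) (Ioi 0)) (R : ℝ) :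
    (fun x => ∫ y in Icc x (x + R), |h y|) =o[atTop] (id : ℝ → ℝ) := by
  set I := ∫ y in Ioi 0, |h y| * (1 + |Real.log y|) ^ (-κ)
  have hI : 0 ≤ I := integral_nonneg fun y => by positivity
  refine isLittleO_iff.2 fun c hc => ?_
  set c' := c / (2 * (I + 1)) with hc'
  have hweight := (isLittleO_one_add_abs_log_rpow_id κ).bound (by positivity : 0 < c')
  obtain ⟨X, hX⟩ := eventually_atTop.1 hweight
  filter_upwards [eventually_ge_atTop X, eventually_ge_atTop R, eventually_gt_atTop 0]
    with x hxX hxR hx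
  have hM (y : ℝ) (hy : y ∈ Icc x (x + R)) : (1 + |Real.log y|) ^ κ ≤ c' * (2 * x) := by
    have hyX := hX y (hxX.trans hy.1)
    rw [Real.norm_of_nonneg (by positivity), id, Real.norm_of_nonneg (hx.le.trans hy.1)] at hyX
    refine hyX.trans ?_
    gcongr
    linarith [hy.2]
  have hint := setIntegral_abs_le_mul_setIntegral measurableSet_Icc
    (fun y hy => hx.trans_le hy.1) hκ (fun y => by positivity) (by positivity)
    fun y hy => one_le_mul_one_add_abs_log_rpow_neg (hM y hy)
  rw [Real.norm_of_nonneg (integral_nonneg fun y => abs_nonneg _), id, Real.norm_of_nonneg hx.le]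
  calc
    _ ≤ c' * (2 * x) * I := hint
    _ ≤ c' * (2 * x) * (I + 1) := by gcongr; linarith
    _ = c * x := by rw [hc']; field_simp

lemma isLittleO_hankelMollify_indicator {φ : ℝ → ℝ} {ε : ℝ} (hφ : IsMollifier ε φ)
    (hloc : LocallyIntegrableOn h (Ioi 0))
    (hκ : IntegrableOn (fun t => |h t| * (1 + |Real.log t|) ^ (-κ)) (Ioi 0)) :
    hankelMollify ((Ici ε).indicator h) φ =o[atTop] (id : ℝ → ℝ) := by
  refine IsBigO.trans_isLittleO (IsBigO.of_bound (2 / ε) ?_)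
    (isLittleO_setIntegral_Icc_add hκ (4 * ε))
  filter_upwards [eventually_ge_atTop ε] with x hx
  have hbound := hφ.abs_hankelMollify_le (locallyIntegrable_indicator_Ici hloc hφ.pos) x
  rw [Real.norm_of_nonneg (integral_nonneg fun y => abs_nonneg _)]
  refine hbound.trans_eq (congrArg _ (setIntegral_congr_fun measurableSet_Icc fun y hy => ?_))
  beta_reduce
  rw [indicator_of_mem (mem_Ici.2 (hx.trans hy.1))]

theorem exists_completelyMonotoneOn_tendsto (hloc : LocallyIntegrableOn h (Ioi 0))
    (hκ : IntegrableOn (fun t => |h t| * (1 + |Real.log t|) ^ (-κ)) (Ioi 0))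
    (hpos : ∀ f : ℝ → ℂ, IsTestFun f → 0 ≤ hankelQF (fun t => (h t : ℂ)) f) :
    ∃ U : ℕ → ℝ → ℝ, (∀ n, CompletelyMonotoneOn (U n) (Ioi 0)) ∧
      ∀ᵐ x ∂volume.restrict (Ioi 0), Tendsto (fun n => U n x) atTop (𝓝 (h x)) := by
  choose φ hφ using fun n : ℕ => exists_isMollifier (Nat.one_div_pos_of_nat (α := ℝ) (n := n))
  refine ⟨fun n => hankelMollify ((Ici (1 / ((n : ℝ) + 1))).indicator h) (φ n), fun n => ?_,
    ae_tendsto_hankelMollify_indicator hφ tendsto_one_div_add_atTop_nhds_zero_nat hloc⟩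
  have hpsd := hankelPSD_hankelMollify hloc hpos (hφ n).pos (hφ n).contDiff
    (hφ n).hasCompactSupport ((hφ n).support_subset.trans Icc_subset_Ici_self)
  exact hpsd.completelyMonotoneOn (isLittleO_hankelMollify_indicator (hφ n) hloc hκ)
    ((hφ n).contDiff_hankelMollify
      (locallyIntegrable_indicator_Ici hloc (hφ n).pos)).contDiffOn

lemma one_add_abs_log_rpow_le {t y : ℝ} (ht : 0 < t) (hy : y ∈ Icc (t / 2) t) :
    (1 + |Real.log y|) ^ κ ≤ (2 * (1 + |Real.log t|)) ^ |κ| := by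
  have hlog_le : Real.log y ≤ Real.log t := Real.log_le_log ((half_pos ht).trans_le hy.1) hy.2
  have hlog_ge : Real.log t - Real.log 2 ≤ Real.log y := by
    rw [← Real.log_div ht.ne' two_ne_zero]
    exact Real.log_le_log (half_pos ht) hy.1
  have habs : |Real.log y| ≤ 1 + |Real.log t| :=
    abs_le.2 ⟨by linarith [neg_abs_le (Real.log t), Real.log_two_lt_d9],
      by linarith [le_abs_self (Real.log t)]⟩
  calc
    (1 + |Real.log y|) ^ κ ≤ (1 + |Real.log y|) ^ |κ| :=
      Real.rpow_le_rpow_of_exponent_le (by linarith [abs_nonneg (Real.log y)]) (le_abs_self κ)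
    _ ≤ (2 * (1 + |Real.log t|)) ^ |κ| := by
      gcongr
      linarith [abs_nonneg (Real.log t)]

theorem exists_le_mul_inv_mul_one_add_abs_log_rpow (hg : AntitoneOn g (Ioi 0))
    (hκ : IntegrableOn (fun t => |g t| * (1 + |Real.log t|) ^ (-κ)) (Ioi 0)) :
    ∃ C : ℝ, 0 < C ∧ ∃ ϰ : ℝ, ∀ t : ℝ, 0 < t → g t ≤ C * t⁻¹ * (1 + |Real.log t|) ^ ϰ := by
  set I := ∫ y in Ioi 0, |g y| * (1 + |Real.log y|) ^ (-κ)
  have hI : 0 ≤ I := integral_nonneg fun y => by positivity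
  refine ⟨2 * 2 ^ |κ| * (I + 1), mul_pos (by positivity) (add_pos_of_nonneg_of_pos hI one_pos), |κ|,
    fun t ht => ?_⟩
  have hsub : Icc (t / 2) t ⊆ Ioi 0 := fun y hy => (half_pos ht).trans_le hy.1
  have hint : IntegrableOn g (Icc (t / 2) t) := (hg.mono hsub).integrableOn_isCompact isCompact_Icc
  have hlower : t / 2 * g t ≤ ∫ y in Icc (t / 2) t, |g y| := by
    have hconst := setIntegral_mono_on (integrableOn_const (by simp)) hint.abs measurableSet_Icc
      fun y hy => (hg (hsub hy) ht hy.2).trans (le_abs_self _)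
    rwa [setIntegral_const, Real.volume_real_Icc_of_le (half_le_self ht.le), smul_eq_mul,
      sub_half] at hconst
  have hupper : ∫ y in Icc (t / 2) t, |g y| ≤ (2 * (1 + |Real.log t|)) ^ |κ| * I :=
    setIntegral_abs_le_mul_setIntegral measurableSet_Icc hsub hκ (fun y => by positivity)
      (by positivity) fun y hy =>
        one_le_mul_one_add_abs_log_rpow_neg (one_add_abs_log_rpow_le ht hy)
  have hI_le : (2 * (1 + |Real.log t|)) ^ |κ| * I ≤ (2 * (1 + |Real.log t|)) ^ |κ| * (I + 1) := by
    gcongr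
    linarith
  rw [mul_right_comm, ← div_eq_mul_inv, le_div_iff₀ ht]
  calc
    g t * t = 2 * (t / 2 * g t) := by ring
    _ ≤ 2 * ((2 * (1 + |Real.log t|)) ^ |κ| * (I + 1)) :=
      mul_le_mul_of_nonneg_left ((hlower.trans hupper).trans hI_le) two_pos.le
    _ = 2 * 2 ^ |κ| * (I + 1) * (1 + |Real.log t|) ^ |κ| := by
      rw [Real.mul_rpow two_pos.le (by positivity)]
      ring

end LogWeight

/-- If a real kernel `h` with `∫₀^∞ |h(t)|(1+|ln t|)^{-κ} dt < ∞` has a positive Hankel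
form, then `h` agrees a.e. on `(0,∞)` with a completely monotonic `C^∞` function `g`
satisfying `g(t) ≤ C t⁻¹ (1+|ln t|)^ϰ`. -/
theorem positive_hankel_completely_monotonic (h : ℝ → ℝ)
    (hloc : LocallyIntegrableOn h (Set.Ioi 0))
    (hκ : ∃ κ : ℝ, IntegrableOn
      (fun t : ℝ => |h t| * (1 + |Real.log t|) ^ (-κ)) (Set.Ioi 0))
    (hpos : ∀ f : ℝ → ℂ, IsTestFun f → 0 ≤ hankelQF (fun t : ℝ => ((h t : ℝ) : ℂ)) f) :
    ∃ g : ℝ → ℝ, ContDiffOn ℝ (⊤ : ℕ∞) g (Set.Ioi 0) ∧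
      (∀ᵐ t ∂(volume.restrict (Set.Ioi (0:ℝ))), h t = g t) ∧
      (∀ n : ℕ, ∀ t : ℝ, 0 < t →
        0 ≤ (-1 : ℝ) ^ n * iteratedDerivWithin n g (Set.Ioi 0) t) ∧
      ∃ C : ℝ, 0 < C ∧ ∃ ϰ : ℝ, ∀ t : ℝ, 0 < t →
        g t ≤ C * t⁻¹ * (1 + |Real.log t|) ^ ϰ := by
  obtain ⟨κ, hκ⟩ := hκ
  obtain ⟨U, hU, hUh⟩ := exists_completelyMonotoneOn_tendsto hloc hκ hpos
  obtain ⟨g, hg, hhg⟩ := CompletelyMonotoneOn.exists_ae_eq_of_ae_tendsto isOpen_Ioi (convex_Ioi 0)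
    hU hUh
  have hg_anti : AntitoneOn g (Ioi 0) := hg.antitoneOn (uniqueDiffOn_Ioi 0) (convex_Ioi 0)
  have hgκ : IntegrableOn (fun t => |g t| * (1 + |Real.log t|) ^ (-κ)) (Ioi 0) :=
    hκ.congr_fun_ae (hhg.mono fun t ht => by simp only [ht])
  exact ⟨g, hg.1, hhg, hg.2, exists_le_mul_inv_mul_one_add_abs_log_rpow hg_anti hgκ⟩
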